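/- arXiv:2002.11961 — 5 statements merged into one kernel-verified Lean document; each statement's English description precedes it below -/
import Mathlib

section
/- Let X be a real Banach space and let E be a closed subspace of X that is reflexive (as a Banach space in its own right). Then E is simultaneously approximatively weakly compact in X. -/
/-!
A minimizing sequence is norm bounded, so the claim reduces to the sequential weak compactness of
bounded sequences `y` in a reflexive normed space (`exists_weakTendsto_subseq`).

For that, let `Y` be the closed linear span of the `y n`. It is separable, so countably many
functionals `g k` (norming a dense sequence of `Y`) separate the points of `Y`
(`exists_separating_functionals`). By compactness of a countable product of intervals, some subsequence of
`y` makes every `g k (y n)` converge. By Banach–Alaoglu in the bidual and reflexivity, this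
subsequence lives in a weakly compact set and its weak cluster points lie in the space itself; as
`Y` is weakly closed (Hahn–Banach) they lie in `Y`, and they all take the same values at the
`g k`. Hence there is exactly one weak cluster point, and by compactness it is the weak limit.
-/

open Filter Topology Pointwise

variable {X : Type*} [NormedAddCommGroup X] [NormedSpace ℝ X]

/-- `simSup A y = sup_{a ∈ A} ‖a - y‖`. -/
noncomputable def simSup (A : Set X) (y : X) : ℝ := ⨆ a : A, ‖(a : X) - y‖

/-- `simDist A C = inf_{y ∈ C} sup_{a ∈ A} ‖a - y‖`. -/
noncomputable def simDist (A C : Set X) : ℝ := ⨅ y : C, simSup A (y : X)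

/-- The set of best simultaneous approximations `P_C(A)`. -/
def simBest (A C : Set X) : Set X := {y | y ∈ C ∧ simSup A y = simDist A C}

/-- The set `P_C(A, δ)`. -/
def simBestApprox (A C : Set X) (δ : ℝ) : Set X :=
  {y | y ∈ C ∧ simSup A y < simDist A C + δ}

/-- `C` is simultaneously proximinal. -/
def SimProximinal (C : Set X) : Prop :=
  ∀ A : Set X, A.Nonempty → Bornology.IsBounded A → (simBest A C).Nonempty

/-- `y` is a minimizing sequence in `C` for `A`. -/
def IsMinimizing (A C : Set X) (y : ℕ → X) : Prop :=
  (∀ n, y n ∈ C) ∧ Tendsto (fun n => simSup A (y n)) atTop (𝓝 (simDist A C))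

/-- Weak convergence of a sequence. -/
def WeakTendsto (y : ℕ → X) (c : X) : Prop :=
  ∀ f : X →L[ℝ] ℝ, Tendsto (fun n => f (y n)) atTop (𝓝 (f c))

/-- `C` is simultaneously approximatively compact. -/
def SimApproxCompact (C : Set X) : Prop :=
  ∀ A : Set X, A.Nonempty → Bornology.IsBounded A → ∀ y : ℕ → X, IsMinimizing A C y →
    ∃ c ∈ C, ∃ φ : ℕ → ℕ, StrictMono φ ∧ Tendsto (y ∘ φ) atTop (𝓝 c)

/-- `C` is simultaneously approximatively weakly compact. -/
def SimApproxWeakCompact (C : Set X) : Prop :=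
  ∀ A : Set X, A.Nonempty → Bornology.IsBounded A → ∀ y : ℕ → X, IsMinimizing A C y →
    ∃ c ∈ C, ∃ φ : ℕ → ℕ, StrictMono φ ∧ WeakTendsto (y ∘ φ) c

/-- `C` is simultaneously strongly proximinal. -/
def SimStronglyProximinal (C : Set X) : Prop :=
  SimProximinal C ∧ ∀ A : Set X, A.Nonempty → Bornology.IsBounded A → ∀ ε > (0 : ℝ),
    ∃ δ > (0 : ℝ), simBestApprox A C δ ⊆ simBest A C + Metric.closedBall (0 : X) ε

/-- `C` is simultaneously weakly strongly proximinal. -/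
def SimWeakStronglyProximinal (C : Set X) : Prop :=
  SimProximinal C ∧ ∀ A : Set X, A.Nonempty → Bornology.IsBounded A →
    ∀ V : Set X, V ∈ 𝓝 (0 : WeakSpace ℝ X) → ∃ δ > (0 : ℝ),
      simBestApprox A C δ ⊆ simBest A C + V

section Reflexive

variable {V : Type*} [NormedAddCommGroup V] [NormedSpace ℝ V]

/-- A separable subspace has a countable family of functionals on the whole space which separates
its points: take norming functionals of a dense sequence. -/
lemma exists_separating_functionals (Y : Submodule ℝ V) [TopologicalSpace.SeparableSpace Y] :
    ∃ g : ℕ → V →L[ℝ] ℝ, (∀ k, ‖g k‖ ≤ 1) ∧ ∀ z ∈ Y, (∀ k, g k z = 0) → z = 0 := by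
  obtain ⟨d, hd⟩ := TopologicalSpace.exists_dense_seq Y
  choose g hg1 hg2 using fun k => exists_dual_vector'' ℝ (d k : V)
  refine ⟨g, hg1, fun z hz h0 => ?_⟩
  by_contra hne
  have hpos : 0 < ‖z‖ := norm_pos_iff.mpr hne
  obtain ⟨k, hk⟩ := Metric.denseRange_iff.mp hd ⟨z, hz⟩ (‖z‖ / 2) (by positivity)
  have hk' : ‖z - d k‖ < ‖z‖ / 2 := by
    simpa [Subtype.dist_eq, dist_eq_norm] using hk
  -- As `g k z = 0`, the norm of `d k` is `g k (d k - z) ≤ ‖d k - z‖`.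
  have h1 : ‖(d k : V)‖ ≤ ‖z - d k‖ := by
    have h2 : g k (d k - z) = ‖(d k : V)‖ := by
      rw [map_sub, h0 k, hg2 k]
      simp
    calc ‖(d k : V)‖ = g k (d k - z) := h2.symm
      _ ≤ ‖g k (d k - z)‖ := le_abs_self _
      _ ≤ 1 * ‖(d k : V) - z‖ := (g k).le_of_opNorm_le (hg1 k) _
      _ = ‖z - d k‖ := by rw [one_mul, norm_sub_rev]
  have h3 : ‖z‖ ≤ ‖z - d k‖ + ‖(d k : V)‖ := by
    simpa using norm_add_le (z - d k) (d k : V)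
  linarith

lemma MapClusterPt.eq_of_tendsto_real {u : ℕ → ℝ} {a b : ℝ} (h : MapClusterPt a atTop u)
    (hb : Tendsto u atTop (𝓝 b)) : a = b := by
  have : (𝓝 a ⊓ 𝓝 b).NeBot := h.neBot.mono (inf_le_inf_left _ hb)
  exact eq_of_nhds_neBot this

/-- A closed subspace is weakly closed, in terms of cluster points of a sequence. -/
lemma mem_of_weak_cluster (Y : Submodule ℝ V) (hY : IsClosed (Y : Set V)) {y : ℕ → V}
    (hy : ∀ n, y n ∈ Y) {z : V}
    (hz : ∀ f : V →L[ℝ] ℝ, MapClusterPt (f z) atTop (fun n => f (y n))) : z ∈ Y := by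
  by_contra hne
  obtain ⟨f, u, hf, hu⟩ := geometric_hahn_banach_closed_point Y.convex hY hne
  obtain ⟨n, hn⟩ := ((hz f).frequently (lt_mem_nhds hu)).exists
  exact absurd (hf (y n) (hy n)) (not_lt.mpr hn.le)

/-- Bounded sequences in a reflexive space have weakly convergent subsequences. -/
theorem exists_weakTendsto_subseq
    (hrefl : Function.Surjective (NormedSpace.inclusionInDoubleDual ℝ V))
    (y : ℕ → V) (M : ℝ) (hM : ∀ n, ‖y n‖ ≤ M) :
    ∃ c : V, ∃ φ : ℕ → ℕ, StrictMono φ ∧ WeakTendsto (y ∘ φ) c := by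
  let Y : Submodule ℝ V := (Submodule.span ℝ (Set.range y)).topologicalClosure
  have hYc : IsClosed (Y : Set V) := Submodule.isClosed_topologicalClosure _
  have hyY : ∀ n, y n ∈ Y := fun n =>
    Submodule.le_topologicalClosure _ (Submodule.subset_span ⟨n, rfl⟩)
  have : TopologicalSpace.SeparableSpace Y :=
    ((Set.countable_range y).isSeparable.span (R := ℝ)).closure.separableSpace
  obtain ⟨g, hg1, hgsep⟩ := exists_separating_functionals Y
  have hcomp : IsCompact (Set.univ.pi fun _ : ℕ => Set.Icc (-M) M) :=
    isCompact_univ_pi fun _ => isCompact_Icc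
  obtain ⟨L, -, φ, hφ, hL⟩ := hcomp.isSeqCompact (x := fun n k => g k (y n)) fun n k _ => by
    have h := (g k).le_of_opNorm_le (hg1 k) (y n)
    rw [one_mul] at h
    exact abs_le.mp (h.trans (hM n))
  have hL' : ∀ k, Tendsto (fun n => g k (y (φ n))) atTop (𝓝 (L k)) := fun k =>
    (tendsto_pi_nhds.mp hL) k
  let J : V → WeakDual ℝ (StrongDual ℝ V) := fun v =>
    StrongDual.toWeakDual (NormedSpace.inclusionInDoubleDual ℝ V v)
  let K : Set (WeakDual ℝ (StrongDual ℝ V)) :=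
    WeakDual.toStrongDual ⁻¹' Metric.closedBall (0 : StrongDual ℝ (StrongDual ℝ V)) M
  have hK : IsCompact K := WeakDual.isCompact_closedBall _ _
  have hmem : ∀ n, J (y (φ n)) ∈ K := fun n => by
    refine (mem_closedBall_zero_iff (E := StrongDual ℝ (StrongDual ℝ V))
      (a := NormedSpace.inclusionInDoubleDual ℝ V (y (φ n)))).mpr ?_
    exact (NormedSpace.double_dual_bound ℝ V _).trans (hM _)
  have heval : ∀ z, MapClusterPt (J z) atTop (fun n => J (y (φ n))) →
      ∀ f : V →L[ℝ] ℝ, MapClusterPt (f z) atTop (fun n => f (y (φ n))) := fun z hz f =>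
    MapClusterPt.continuousAt_comp (f := fun p : WeakDual ℝ (StrongDual ℝ V) => p f)
      (WeakDual.eval_continuous f).continuousAt hz
  have hsurj : ∀ p : WeakDual ℝ (StrongDual ℝ V), ∃ z, J z = p := fun p =>
    hrefl (WeakDual.toStrongDual p)
  obtain ⟨p, -, hp⟩ := hK (f := map (fun n => J (y (φ n))) atTop)
    (tendsto_principal.mpr (Eventually.of_forall hmem))
  obtain ⟨c, rfl⟩ := hsurj p
  have hc := heval c hp
  have hlim : Tendsto (fun n => J (y (φ n))) atTop (𝓝 (J c)) := by
    refine hK.tendsto_nhds_of_unique_mapClusterPt (Eventually.of_forall hmem) fun q _ hq => ?_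
    obtain ⟨z, rfl⟩ := hsurj q
    have hz := heval z hq
    have hzc : z - c ∈ Y :=
      Y.sub_mem (mem_of_weak_cluster Y hYc (fun n => hyY (φ n)) hz)
        (mem_of_weak_cluster Y hYc (fun n => hyY (φ n)) hc)
    have h0 := hgsep _ hzc fun k => by
      rw [map_sub, (hz (g k)).eq_of_tendsto_real (hL' k), (hc (g k)).eq_of_tendsto_real (hL' k),
        sub_self]
    rw [sub_eq_zero.mp h0]
  exact ⟨c, φ, hφ, fun f => ((WeakDual.eval_continuous f).tendsto (J c)).comp hlim⟩

end Reflexive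

lemma norm_sub_le_simSup {W : Type*} [NormedAddCommGroup W] {A : Set W}
    (hA : Bornology.IsBounded A) {a : W} (ha : a ∈ A) (y : W) : ‖a - y‖ ≤ simSup A y := by
  obtain ⟨R, hR⟩ := hA.exists_norm_le
  refine le_ciSup (f := fun a : A => ‖(a : W) - y‖) ⟨R + ‖y‖, ?_⟩ ⟨a, ha⟩
  rintro _ ⟨b, rfl⟩
  exact (norm_sub_le _ _).trans (by gcongr; exact hR b b.2)

/-- A closed reflexive subspace of a Banach space is simultaneously approximatively
weakly compact. -/
theorem reflexive_subspace_simApproxWeakCompact [CompleteSpace X]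
    (E : Subspace ℝ X) (hE : IsClosed (E : Set X))
    (hrefl : Function.Surjective (NormedSpace.inclusionInDoubleDual ℝ E)) :
    SimApproxWeakCompact (E : Set X) := by
  rintro A ⟨a, ha⟩ hA y ⟨hyE, hy⟩
  obtain ⟨M, hM⟩ := hy.bddAbove_range
  have hbound : ∀ n, ‖y n‖ ≤ ‖a‖ + M := fun n => by
    have h1 : ‖y n‖ ≤ ‖a‖ + ‖a - y n‖ := by
      simpa using norm_sub_le a (a - y n)
    have h2 := (norm_sub_le_simSup hA ha (y n)).trans (hM ⟨n, rfl⟩)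
    linarith
  obtain ⟨c, φ, hφ, hc⟩ :=
    exists_weakTendsto_subseq hrefl (fun n => (⟨y n, hyE n⟩ : E)) (‖a‖ + M) hbound
  -- Functionals on `X` restrict to `E`.
  exact ⟨c, c.2, φ, hφ, fun f => hc (f.comp E.subtypeL)⟩
end

section
/- Let X be a real Banach space. Then X is reflexive if and only if every nonempty closed convex subset of X is simultaneously proximinal. -/
/-!
If `X` is reflexive, the sets `{y ∈ C | simSup A y ≤ simDist A C + 1 / (n + 1)}` are intersections
of `C` with closed balls, hence closed, convex and bounded, hence weakly compact; they are nonempty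
and decreasing, and a common point is a best simultaneous approximation.

Conversely, suppose `X` is not reflexive. It suffices to find a nonempty closed convex `C` without
an element of minimal norm, since then `A = {0}` has no best approximation in `C`
(`exists_no_min_norm`). James's theorem is not needed, because `C` may be chosen freely:

* By the Bishop–Phelps theorem in the dual of `X` (`bishop_phelps`, from Ekeland's principle
  `ekeland_ball`), norm-attaining elements are dense in the bidual. The canonical image of `X` is
  closed and proper, so there are `F` outside it and a functional `f` with
  `‖F‖ ≤ 1`, `‖f‖ ≤ 1`, `F f = 1` (`exists_norm_attaining_notMem_range`).
* As `F` has positive distance to `X`, on the annihilator of any finite set `F` has norm bounded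
  below (`exists_annihilating`). Together with Goldstine's theorem (`goldstine_finset`) this gives
  points `z n` of the unit ball and bounded functionals `g n` such that `g i (z n) = 0` for `n < i`,
  whereas `f (z n)` and `g i (z n)`, `i ≤ n`, are nearly `1` (`exists_james_sequence`).
* Let `Y` be the closed span of the `z n`, and let `C` be the set of `y ∈ Y` with `1 ≤ f y` and
  `1 ≤ g i y + c i * (f y - 1)` for all `i`, with suitable `c i`. Slight dilations of the `z n`
  belong to `C`, so `C` contains elements of norm arbitrarily close to `1`. An element of `C` of
  norm at most `1` would have `f y = 1`, so `1 ≤ g i y` for all `i`, which is impossible since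
  `g i → 0` pointwise on `Y`.
-/

open Filter Topology Pointwise

variable {X : Type*} [NormedAddCommGroup X] [NormedSpace ℝ X]

/-! ### Reflexive spaces -/

lemma bddAbove_norm_sub {E : Type*} [NormedAddCommGroup E] {A : Set E}
    (hA : Bornology.IsBounded A) (y : E) : BddAbove (Set.range fun a : A => ‖(a : E) - y‖) := by
  obtain ⟨R, hR⟩ := hA.exists_norm_le
  refine ⟨R + ‖y‖, ?_⟩
  rintro _ ⟨a, rfl⟩
  exact (norm_sub_le _ _).trans (by gcongr; exact hR a a.2)

lemma simSup_le_iff {E : Type*} [NormedAddCommGroup E] {A : Set E} (hne : A.Nonempty)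
    (hA : Bornology.IsBounded A) {y : E} {r : ℝ} :
    simSup A y ≤ r ↔ ∀ a ∈ A, y ∈ Metric.closedBall a r := by
  have : Nonempty A := hne.to_subtype
  rw [simSup, ciSup_le_iff (bddAbove_norm_sub hA y)]
  simp only [Subtype.forall, mem_closedBall_iff_norm']

/-- In a reflexive space, bounded closed convex sets are weakly compact. -/
lemma isCompact_toWeakSpace_image
    (hX : Function.Surjective (NormedSpace.inclusionInDoubleDual ℝ X)) {S : Set X}
    (hc : IsClosed S) (hconv : Convex ℝ S) (hb : Bornology.IsBounded S) :
    IsCompact (toWeakSpace ℝ X '' S) := by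
  have h := NormedSpace.isCompact_closure_of_isBounded ℝ X
    (S := toWeakSpace ℝ X '' S) ?_ ?_
  · rwa [← hconv.toWeakSpace_closure ℝ, hc.closure_eq] at h
  · rwa [Set.preimage_image_eq _ (toWeakSpace ℝ X).injective]
  · intro G _
    obtain ⟨x, hx⟩ := hX (WeakDual.toStrongDual G)
    exact ⟨toWeakSpace ℝ X x, hx⟩

lemma simProximinal_of_reflexive
    (hX : Function.Surjective (NormedSpace.inclusionInDoubleDual ℝ X)) {C : Set X}
    (hne : C.Nonempty) (hc : IsClosed C) (hconv : Convex ℝ C) : SimProximinal C := by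
  intro A hA hb
  have hCne : Nonempty C := hne.to_subtype
  have hbdd : BddBelow (Set.range fun y : C => simSup A (y : X)) := by
    refine ⟨0, ?_⟩
    rintro _ ⟨y, rfl⟩
    exact Real.iSup_nonneg fun a => norm_nonneg _
  -- The sublevel sets of `simSup A` on `C` are closed convex bounded, and they decrease to `P_C(A)`.
  let S : ℕ → Set X := fun n => C ∩ {y | simSup A y ≤ simDist A C + 1 / ((n : ℝ) + 1)}
  have hSeq : ∀ r : ℝ, {y | simSup A y ≤ r} = ⋂ a ∈ A, Metric.closedBall a r := by
    intro r
    ext y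
    simp only [Set.mem_ofPred_eq, simSup_le_iff hA hb, Set.mem_iInter]
  have hScl : ∀ n, IsClosed (S n) := by
    intro n
    refine hc.inter ?_
    rw [hSeq]
    exact isClosed_biInter fun a _ => Metric.isClosed_closedBall
  have hSconv : ∀ n, Convex ℝ (S n) := by
    intro n
    refine hconv.inter ?_
    rw [hSeq]
    exact convex_iInter₂ fun a _ => convex_closedBall a _
  have hSb : ∀ n, Bornology.IsBounded (S n) := by
    intro n
    obtain ⟨a, ha⟩ := hA
    refine (Metric.isBounded_closedBall (x := a)
      (r := simDist A C + 1 / ((n : ℝ) + 1))).subset ?_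
    intro y hy
    exact (simSup_le_iff ⟨a, ha⟩ hb).1 hy.2 a ha
  have hcomp := fun n => isCompact_toWeakSpace_image hX (hScl n) (hSconv n) (hSb n)
  have hwcl : ∀ n, IsClosed (toWeakSpace ℝ X '' S n) := by
    intro n
    have := (hSconv n).toWeakSpace_closure ℝ
    rw [(hScl n).closure_eq] at this
    rw [this]
    exact isClosed_closure
  obtain ⟨w, hw⟩ := IsCompact.nonempty_iInter_of_sequence_nonempty_isCompact_isClosed
    (fun n => toWeakSpace ℝ X '' S n) (by
      intro n
      refine Set.image_mono fun y hy => ⟨hy.1, ?_⟩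
      have h2 : simSup A y ≤ simDist A C + 1 / (((n + 1 : ℕ) : ℝ) + 1) := hy.2
      change simSup A y ≤ simDist A C + 1 / ((n : ℝ) + 1)
      have : 1 / (((n + 1 : ℕ) : ℝ) + 1) ≤ 1 / ((n : ℝ) + 1) :=
        one_div_le_one_div_of_le (by positivity) (by push_cast; linarith)
      linarith) (by
      intro n
      obtain ⟨y, hy⟩ := exists_lt_of_ciInf_lt
        (show (⨅ y : C, simSup A (y : X)) < simDist A C + 1 / ((n : ℝ) + 1) from
          lt_add_of_pos_right _ (by positivity))
      exact ⟨_, y, ⟨y.2, hy.le⟩, rfl⟩) (hcomp 0) hwcl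
  obtain ⟨y, rfl⟩ := (toWeakSpace ℝ X).surjective w
  have hy : ∀ n, y ∈ S n := by
    intro n
    obtain ⟨z, hz, hzy⟩ := Set.mem_iInter.1 hw n
    rwa [← (toWeakSpace ℝ X).injective hzy]
  refine ⟨y, (hy 0).1, le_antisymm ?_ (ciInf_le hbdd ⟨y, (hy 0).1⟩)⟩
  refine ge_of_tendsto' (f := fun n : ℕ => simDist A C + 1 / ((n : ℝ) + 1)) (x := atTop) ?_
    fun n => (hy n).2
  simpa using tendsto_one_div_add_atTop_nhds_zero_nat.const_add (simDist A C)

/-! ### Goldstine's theorem and annihilators of finite sets -/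

/-- Goldstine's theorem, for finitely many functionals at a time. -/
lemma goldstine_finset {F : StrongDual ℝ (StrongDual ℝ X)} (hF : ‖F‖ ≤ 1)
    (s : Finset (StrongDual ℝ X)) {ε : ℝ} (hε : 0 < ε) :
    ∃ z : X, ‖z‖ ≤ 1 ∧ ∀ g ∈ s, |g z - F g| < ε := by
  classical
  let T : X →L[ℝ] (s → ℝ) := ContinuousLinearMap.pi fun g => (g : StrongDual ℝ X)
  let v : s → ℝ := fun g => F g
  have hv : v ∈ closure (T '' Metric.closedBall 0 1) := by
    by_contra hv
    obtain ⟨L, u, hL, hu⟩ := geometric_hahn_banach_closed_point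
      (((convex_closedBall (0 : X) 1).linear_image T.toLinearMap).closure) isClosed_closure hv
    have hball : ∀ x : X, ‖x‖ ≤ 1 → L (T x) < u := fun x hx =>
      hL _ (subset_closure ⟨x, by simpa using hx, rfl⟩)
    have hu0 : 0 < u := by simpa using hball 0 (by simp)
    have hnorm : ‖L ∘L T‖ ≤ u := by
      refine ContinuousLinearMap.opNorm_le_of_unit_norm hu0.le fun x hx => ?_
      have h1 := hball x hx.le
      have h2 := hball (-x) (by simpa using hx.le)
      rw [map_neg, map_neg] at h2
      rw [Real.norm_eq_abs, abs_le]
      exact ⟨by simp; linarith, by simp; linarith⟩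
    have hsum : ∀ w : s → ℝ, L w = ∑ g, w g * L (fun j => if g = j then 1 else 0) := fun w => by
      simpa using LinearMap.pi_apply_eq_sum_univ L.toLinearMap w
    have hLT : L ∘L T = ∑ g : s, L (fun j => if g = j then 1 else 0) • (g : StrongDual ℝ X) := by
      ext x
      rw [ContinuousLinearMap.comp_apply, hsum]
      simp [T, mul_comm]
    have hFv : F (L ∘L T) = L v := by
      simp [hsum v, hLT, v, mul_comm]
    have h1 : F (L ∘L T) ≤ u := by
      calc F (L ∘L T) ≤ ‖F (L ∘L T)‖ := le_abs_self _
        _ ≤ ‖F‖ * ‖L ∘L T‖ := F.le_opNorm _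
        _ ≤ 1 * u := by gcongr
        _ = u := one_mul u
    linarith
  obtain ⟨_, ⟨z, hz, rfl⟩, hd⟩ := Metric.mem_closure_iff.1 hv ε hε
  refine ⟨z, by simpa using hz, fun g hg => ?_⟩
  have := (dist_pi_lt_iff hε).1 hd ⟨g, hg⟩
  rwa [Real.dist_eq, abs_sub_comm] at this

lemma isClosed_range_inclusionInDoubleDual [CompleteSpace X] :
    IsClosed (Set.range (NormedSpace.inclusionInDoubleDual ℝ X)) :=
  (NormedSpace.inclusionInDoubleDualLi (E := X)
    ℝ).isometry.isUniformInducing.isComplete_range.isClosed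

set_option maxSynthPendingDepth 3 in
/-- A bidual element `F` outside the canonical image of `X` is bounded away from that image, so on
the annihilator of any finite set `F` has norm at least a fixed positive number. -/
lemma exists_annihilating [CompleteSpace X] {F : StrongDual ℝ (StrongDual ℝ X)}
    (hF : F ∉ Set.range (NormedSpace.inclusionInDoubleDual ℝ X)) :
    ∃ K : ℝ, 0 < K ∧ ∀ s : Finset X,
      ∃ g : StrongDual ℝ X, ‖g‖ ≤ K ∧ F g = 1 ∧ ∀ x ∈ s, g x = 0 := by
  have hd := (isClosed_range_inclusionInDoubleDual.notMem_iff_infDist_pos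
    (Set.range_nonempty _)).1 hF
  set d := Metric.infDist F (Set.range (NormedSpace.inclusionInDoubleDual ℝ X)) with hd_def
  refine ⟨2 / d, by positivity, fun s => ?_⟩
  let L : s → StrongDual ℝ X →ₗ[ℝ] ℝ := fun x =>
    (NormedSpace.inclusionInDoubleDual ℝ X x).toLinearMap
  let p : Submodule ℝ (StrongDual ℝ X) := ⨅ x, LinearMap.ker (L x)
  obtain ⟨F', hF'ext, hF'norm⟩ := exists_extension_norm_eq p (F.comp p.subtypeL)
  have hspan : (F - F').toLinearMap ∈ Submodule.span ℝ (Set.range L) := by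
    refine mem_span_of_iInf_ker_le_ker fun g hg => ?_
    have := hF'ext ⟨g, hg⟩
    simp at this
    simp [this]
  have hmem : F - F' ∈ Set.range (NormedSpace.inclusionInDoubleDual ℝ X) := by
    obtain ⟨c, hc⟩ := (Submodule.mem_span_range_iff_exists_fun ℝ).1 hspan
    refine ⟨∑ x : s, c x • (x : X), ?_⟩
    ext g
    have := LinearMap.congr_fun hc g
    simpa [L] using this
  have hdF : d ≤ ‖F.comp p.subtypeL‖ := by
    rw [← hF'norm]
    calc d ≤ dist F (F - F') := Metric.infDist_le_dist_of_mem hmem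
      _ = ‖F'‖ := by rw [dist_eq_norm]; congr 1; abel
  obtain ⟨g, hg⟩ : ∃ g : p, d / 2 * ‖g‖ < ‖F g‖ := by
    by_contra! hcon
    have := (F.comp p.subtypeL).opNorm_le_bound (by positivity) hcon
    linarith
  have hFg : F g ≠ 0 := by
    intro h0
    rw [h0, norm_zero] at hg
    have : 0 ≤ d / 2 * ‖g‖ := by positivity
    linarith
  refine ⟨(F g)⁻¹ • (g : StrongDual ℝ X), ?_, by simp [hFg], fun x hx => ?_⟩
  · have : 0 < ‖F g‖ := norm_pos_iff.2 hFg
    rw [norm_smul, norm_inv, inv_mul_le_iff₀ this]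
    have h2 : ‖(g : StrongDual ℝ X)‖ = ‖g‖ := rfl
    rw [h2, mul_div_assoc', le_div_iff₀ hd]
    linarith
  · have := (Submodule.mem_iInf _).1 g.2 ⟨x, hx⟩
    have h0 : (g : StrongDual ℝ X) x = 0 := this
    simp [h0]

/-! ### Ekeland's principle and the Bishop–Phelps theorem -/

/-- Ekeland's variational principle for a continuous linear functional on the closed unit ball. -/
lemma ekeland_ball {E : Type*} [NormedAddCommGroup E] [NormedSpace ℝ E] [CompleteSpace E]
    (F : StrongDual ℝ E) {ε : ℝ} (hε : 0 < ε) :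
    ∃ f : E, ‖f‖ ≤ 1 ∧ ∀ h : E, ‖h‖ ≤ 1 → F h - F f ≤ ε * ‖h - f‖ := by
  -- `S h` is the set of points above `h` for the order `ε * ‖k - h‖ ≤ F k - F h` on the ball.
  let S : E → Set E := fun h => {k | ‖k‖ ≤ 1 ∧ ε * ‖k - h‖ ≤ F k - F h}
  have hSself : ∀ h : E, ‖h‖ ≤ 1 → h ∈ S h := fun h hh => ⟨hh, by simp⟩
  have hStrans : ∀ {h k l : E}, k ∈ S h → l ∈ S k → l ∈ S h := by
    rintro h k l ⟨_, hk⟩ ⟨hl1, hl⟩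
    refine ⟨hl1, ?_⟩
    have : ‖l - h‖ ≤ ‖l - k‖ + ‖k - h‖ := norm_sub_le_norm_sub_add_norm_sub l k h
    nlinarith
  have hFle : ∀ h : E, ‖h‖ ≤ 1 → F h ≤ ‖F‖ := fun h hh =>
    (le_abs_self _).trans (F.unit_le_opNorm h hh)
  have hbdd : ∀ h, BddAbove (F '' S h) := by
    rintro h
    refine ⟨‖F‖, ?_⟩
    rintro _ ⟨k, hk, rfl⟩
    exact hFle k hk.1
  -- Each step comes within `1 / (n + 1)` of the supremum of `F` over the points above.
  have step : ∀ (n : ℕ) (h : Metric.closedBall (0 : E) 1), ∃ k : Metric.closedBall (0 : E) 1,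
      (k : E) ∈ S h ∧ ∀ l ∈ S (h : E), F l ≤ F k + 1 / ((n : ℝ) + 1) := by
    rintro n ⟨h, hh⟩
    have hh1 : ‖h‖ ≤ 1 := by simpa using hh
    obtain ⟨_, ⟨k, hk, rfl⟩, hlt⟩ := exists_lt_of_lt_csSup (s := F '' S h)
      (b := sSup (F '' S h) - 1 / ((n : ℝ) + 1)) ⟨_, h, hSself h hh1, rfl⟩
      (sub_lt_self _ (by positivity))
    refine ⟨⟨k, by simpa using hk.1⟩, hk, fun l hl => ?_⟩
    have := le_csSup (hbdd h) ⟨l, hl, rfl⟩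
    simp only
    linarith
  choose succ_pt hsucc hsucc' using step
  obtain ⟨a, ha⟩ : ∃ a : ℕ → Metric.closedBall (0 : E) 1, ∀ n, a (n + 1) = succ_pt n (a n) :=
    ⟨fun n => Nat.rec ⟨0, by simp⟩ (fun n h => succ_pt n h) n, fun n => rfl⟩
  have hball : ∀ n : ℕ, ‖(a n : E)‖ ≤ 1 := by
    intro n
    simpa only [mem_closedBall_zero_iff] using (a n).2
  have hmem : ∀ m n : ℕ, m ≤ n → (a n : E) ∈ S (a m) := by
    intro m n hmn
    induction n, hmn using Nat.le_induction with
    | base => exact hSself _ (hball m)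
    | succ n _ ih => exact hStrans ih (ha n ▸ hsucc n (a n))
  have hmono : Monotone fun n => F (a n : E) := by
    intro m n hmn
    have h1 : ε * ‖(a n : E) - a m‖ ≤ F (a n : E) - F (a m : E) := (hmem m n hmn).2
    have : 0 ≤ ε * ‖(a n : E) - a m‖ := by positivity
    simp only
    linarith
  have hFc : CauchySeq fun n => F (a n : E) :=
    (tendsto_atTop_ciSup hmono ⟨‖F‖, by rintro _ ⟨n, rfl⟩; exact hFle _ (hball n)⟩).cauchySeq
  have hcauchy : CauchySeq fun n => (a n : E) := by
    rw [Metric.cauchySeq_iff'] at hFc ⊢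
    intro δ hδ
    obtain ⟨N, hN⟩ := hFc (ε * δ) (by positivity)
    refine ⟨N, fun n hn => ?_⟩
    have h1 := hN n hn
    have h2 : ε * ‖(a n : E) - a N‖ ≤ F (a n : E) - F (a N : E) := (hmem N n hn).2
    rw [Real.dist_eq] at h1
    rw [dist_eq_norm]
    exact lt_of_mul_lt_mul_left (h2.trans_lt ((le_abs_self _).trans_lt h1)) hε.le
  obtain ⟨f, hf⟩ := cauchySeq_tendsto_of_complete hcauchy
  have hFf : Tendsto (fun n => F (a n : E)) atTop (𝓝 (F f)) := (F.continuous.tendsto f).comp hf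
  have hf1 : ‖f‖ ≤ 1 := le_of_tendsto' hf.norm hball
  have hfS : ∀ m, f ∈ S (a m) := by
    intro m
    refine ⟨hf1, le_of_tendsto_of_tendsto ((hf.sub_const _).norm.const_mul ε)
      (hFf.sub_const _) ?_⟩
    filter_upwards [eventually_ge_atTop m] with n hn
    exact (hmem m n hn).2
  refine ⟨f, hf1, fun h hh => ?_⟩
  by_contra! hcon
  have hhS : h ∈ S f := ⟨hh, hcon.le⟩
  have hle : F h ≤ F f := by
    have hlim : Tendsto (fun n : ℕ => F (a (n + 1) : E) + 1 / ((n : ℝ) + 1)) atTop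
        (𝓝 (F f + 0)) :=
      ((tendsto_add_atTop_iff_nat 1).2 hFf).add tendsto_one_div_add_atTop_nhds_zero_nat
    rw [add_zero] at hlim
    refine ge_of_tendsto' hlim fun n => ?_
    exact ha n ▸ hsucc' n (a n) h (hStrans (hfS n) hhS)
  have : 0 ≤ ε * ‖h - f‖ := by positivity
  linarith

/-- The Bishop–Phelps theorem for the unit ball: norm-attaining functionals are dense. -/
lemma bishop_phelps {E : Type*} [NormedAddCommGroup E] [NormedSpace ℝ E] [CompleteSpace E]
    (F : StrongDual ℝ E) {ε : ℝ} (hε : 0 < ε) :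
    ∃ G : StrongDual ℝ E, ‖F - G‖ ≤ ε ∧ ∃ f : E, ‖f‖ ≤ 1 ∧ G f = ‖G‖ := by
  obtain ⟨f, hf1, hf⟩ := ekeland_ball F hε
  -- Separate the strict epigraph of `ε * ‖· - f‖` from the hypograph of `F - F f` over the ball.
  let s : Set (E × ℝ) := {q | ε * ‖q.1 - f‖ < q.2}
  let t : Set (E × ℝ) := {q | ‖q.1‖ ≤ 1 ∧ q.2 ≤ F q.1 - F f}
  have hs_open : IsOpen s := isOpen_lt (by fun_prop) (by fun_prop)
  have hs_conv : Convex ℝ s := by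
    rintro ⟨x, p⟩ hx ⟨y, q⟩ hy α β hα hβ hαβ
    change ε * ‖x - f‖ < p at hx
    change ε * ‖y - f‖ < q at hy
    change ε * ‖α • x + β • y - f‖ < α * p + β * q
    have h1 : α • x + β • y - f = α • (x - f) + β • (y - f) := by
      have : f = (α + β) • f := by rw [hαβ, one_smul]
      nth_rewrite 1 [this]
      module
    have h2 : ‖α • x + β • y - f‖ ≤ α * ‖x - f‖ + β * ‖y - f‖ := by
      rw [h1]
      refine (norm_add_le _ _).trans ?_
      rw [norm_smul, norm_smul, Real.norm_of_nonneg hα, Real.norm_of_nonneg hβ]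
    have h3 : ε * ‖α • x + β • y - f‖ ≤ α * (ε * ‖x - f‖) + β * (ε * ‖y - f‖) := by
      nlinarith
    rcases hα.eq_or_lt with rfl | hα'
    · obtain rfl : β = 1 := by linarith
      linarith
    · have := mul_lt_mul_of_pos_left hx hα'
      have := mul_le_mul_of_nonneg_left hy.le hβ
      linarith
  have ht_conv : Convex ℝ t := by
    rintro ⟨x, p⟩ hx ⟨y, q⟩ hy α β hα hβ hαβ
    obtain ⟨hx1, hx2⟩ : ‖x‖ ≤ 1 ∧ p ≤ F x - F f := hx
    obtain ⟨hy1, hy2⟩ : ‖y‖ ≤ 1 ∧ q ≤ F y - F f := hy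
    change ‖α • x + β • y‖ ≤ 1 ∧ α * p + β * q ≤ F (α • x + β • y) - F f
    constructor
    · have := convex_closedBall (0 : E) 1 (x := x) (by simpa using hx1) (y := y)
        (by simpa using hy1) hα hβ hαβ
      simpa using this
    · rw [map_add, map_smul, map_smul, smul_eq_mul, smul_eq_mul]
      have h1 := mul_le_mul_of_nonneg_left hx2 hα
      have h2 := mul_le_mul_of_nonneg_left hy2 hβ
      have h3 : F f = α * F f + β * F f := by rw [← add_mul, hαβ, one_mul]
      linarith
  have hdisj : Disjoint s t := by
    rw [Set.disjoint_left]
    rintro ⟨x, p⟩ hx ⟨hx1, hx2⟩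
    change ε * ‖x - f‖ < p at hx
    have := hf x hx1
    simp only at hx2
    linarith
  obtain ⟨L, u, hLs, hLt⟩ := geometric_hahn_banach_open hs_conv hs_open ht_conv hdisj
  let φ : StrongDual ℝ E := L.comp (ContinuousLinearMap.inl ℝ E ℝ)
  let c : ℝ := L (0, 1)
  have hL : ∀ x p, L (x, p) = φ x + p * c := by
    intro x p
    have : ((x, p) : E × ℝ) = (x, 0) + p • (0, 1) := by simp
    rw [this, map_add, map_smul]
    rfl
  have hu : u ≤ φ f := by
    have := hLt (f, 0) ⟨hf1, by simp⟩
    simpa [hL] using this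
  have hc : c < 0 := by
    have := hLs (f, 1) (show ε * ‖f - f‖ < 1 by simp)
    rw [hL] at this
    linarith
  have hs' : ∀ x, ∀ η > 0, φ x + (ε * ‖x - f‖ + η) * c < u := by
    intro x η hη
    rw [← hL]
    exact hLs _ (show ε * ‖x - f‖ < ε * ‖x - f‖ + η by linarith)
  have hφu : φ f ≤ u := by
    refine le_of_forall_pos_le_add fun η hη => ?_
    have := hs' f (η / (-c)) (div_pos hη (by linarith))
    rw [sub_self, norm_zero, mul_zero, zero_add, div_neg, neg_mul,
      div_mul_cancel₀ _ hc.ne] at this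
    linarith
  have hφ : ∀ v, φ v ≤ ε * ‖v‖ * (-c) := by
    intro v
    refine le_of_forall_pos_le_add fun η hη => ?_
    have := hs' (f + v) (η / (-c)) (div_pos hη (by linarith))
    rw [add_sub_cancel_left, add_mul, div_neg, neg_mul, div_mul_cancel₀ _ hc.ne, map_add] at this
    linarith
  have hG : ∀ h : E, ‖h‖ ≤ 1 → (F + c⁻¹ • φ) h ≤ (F + c⁻¹ • φ) f := by
    intro h hh
    have h1 := hLt (h, F h - F f) ⟨hh, le_rfl⟩
    rw [hL] at h1
    have h2 : φ f - φ h ≤ (F h - F f) * c := by linarith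
    have h3 : c⁻¹ * ((F h - F f) * c) ≤ c⁻¹ * (φ f - φ h) :=
      mul_le_mul_of_nonpos_left h2 (inv_nonpos.2 hc.le)
    rw [mul_comm _ c, inv_mul_cancel_left₀ hc.ne] at h3
    simp only [add_apply, smul_apply, smul_eq_mul]
    linarith
  refine ⟨F + c⁻¹ • φ, ?_, f, hf1, le_antisymm ?_ ?_⟩
  · refine ContinuousLinearMap.opNorm_le_bound _ hε.le fun v => ?_
    have h1 := hφ v
    have h2 := hφ (-v)
    rw [map_neg, norm_neg] at h2
    have h3 : |φ v| ≤ ε * ‖v‖ * (-c) := abs_le.2 ⟨by linarith, h1⟩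
    have h4 : (F - (F + c⁻¹ • φ)) v = -(c⁻¹ * φ v) := by simp
    rw [h4, norm_neg, norm_mul, norm_inv, Real.norm_eq_abs, Real.norm_eq_abs, abs_of_neg hc,
      inv_mul_le_iff₀ (by linarith)]
    linarith
  · exact (le_abs_self _).trans ((F + c⁻¹ • φ).unit_le_opNorm f hf1)
  · have h0 : 0 ≤ (F + c⁻¹ • φ) f := by simpa using hG 0 (by simp)
    refine ContinuousLinearMap.opNorm_le_of_unit_norm h0 fun x hx => ?_
    have h1 := hG x hx.le
    have h2 := hG (-x) (by simpa using hx.le)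
    rw [map_neg] at h2
    exact abs_le.2 ⟨by linarith, h1⟩

/-! ### A closed convex set without an element of minimal norm in a non-reflexive space -/

set_option maxSynthPendingDepth 3 in
/-- In a non-reflexive space some norm-attaining bidual element of norm at most one lies outside
the canonical image: by Bishop–Phelps such elements are dense, while the image is closed. -/
lemma exists_norm_attaining_notMem_range [CompleteSpace X]
    (hX : ¬ Function.Surjective (NormedSpace.inclusionInDoubleDual ℝ X)) :
    ∃ F : StrongDual ℝ (StrongDual ℝ X),
      F ∉ Set.range (NormedSpace.inclusionInDoubleDual ℝ X) ∧ ‖F‖ ≤ 1 ∧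
      ∃ f : StrongDual ℝ X, ‖f‖ ≤ 1 ∧ F f = 1 := by
  obtain ⟨F₀, hF₀⟩ := not_forall.1 hX
  have hd := (isClosed_range_inclusionInDoubleDual.notMem_iff_infDist_pos
    (Set.range_nonempty _)).1 hF₀
  set d := Metric.infDist F₀ (Set.range (NormedSpace.inclusionInDoubleDual ℝ X)) with hd_def
  obtain ⟨G, hG, f, hf, hGf⟩ := bishop_phelps F₀ (half_pos hd)
  have hGr : G ∉ Set.range (NormedSpace.inclusionInDoubleDual ℝ X) := by
    intro hmem
    have := Metric.infDist_le_dist_of_mem (x := F₀) hmem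
    rw [dist_eq_norm] at this
    linarith
  have hG0 : ‖G‖ ≠ 0 := by
    intro h0
    rw [norm_eq_zero] at h0
    exact hGr ⟨0, by simp [h0]⟩
  refine ⟨‖G‖⁻¹ • G, ?_, ?_, f, hf, ?_⟩
  · rintro ⟨x, hx⟩
    exact hGr ⟨‖G‖ • x, by rw [map_smul, hx, smul_inv_smul₀ hG0]⟩
  · rw [norm_smul, norm_inv, norm_norm, inv_mul_cancel₀ hG0]
  · rw [smul_apply, hGf, smul_eq_mul, inv_mul_cancel₀ hG0]

/-- The interlaced sequences of James: `g n` vanishes on the earlier `z k`, while `z n` almost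
attains `F f = 1` at `f` and `F (g i) = 1` at `g i` for every `i ≤ n`. The error is controlled by
an auxiliary strictly increasing sequence `N` of indices. -/
lemma exists_james_sequence [CompleteSpace X] {F : StrongDual ℝ (StrongDual ℝ X)}
    (hF : F ∉ Set.range (NormedSpace.inclusionInDoubleDual ℝ X)) (hF1 : ‖F‖ ≤ 1)
    {f : StrongDual ℝ X} (hf : F f = 1) :
    ∃ (K : ℝ) (N : ℕ → ℕ) (z : ℕ → X) (g : ℕ → StrongDual ℝ X), 0 < K ∧ StrictMono N ∧
      (∀ n, ‖z n‖ ≤ 1) ∧ (∀ n, ‖g n‖ ≤ K) ∧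
      (∀ n, 1 - 1 / (4 * ((N n : ℝ) + 1)) ≤ f (z n)) ∧
      (∀ i n, i ≤ n → 1 - 1 / (4 * ((N n : ℝ) + 1)) ≤ g i (z n)) ∧
      ∀ i n, n < i → g i (z n) = 0 := by
  classical
  obtain ⟨K, hK, hann⟩ := exists_annihilating hF
  obtain ⟨a, haP, har⟩ := exists_seq_of_forall_finset_exists
    (α := ℕ × X × StrongDual ℝ X)
    (fun q => ‖q.2.1‖ ≤ 1 ∧ ‖q.2.2‖ ≤ K ∧ F q.2.2 = 1 ∧
      1 - 1 / (4 * ((q.1 : ℝ) + 1)) ≤ f q.2.1 ∧ 1 - 1 / (4 * ((q.1 : ℝ) + 1)) ≤ q.2.2 q.2.1)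
    (fun q q' => q.1 < q'.1 ∧ q'.2.2 q.2.1 = 0 ∧
      1 - 1 / (4 * ((q'.1 : ℝ) + 1)) ≤ q.2.2 q'.2.1) (by
    intro s hs
    obtain ⟨g, hgK, hFg, hg0⟩ := hann (s.image fun q => q.2.1)
    let M : ℕ := s.sup (fun q => q.1) + 1
    obtain ⟨z, hz1, hz⟩ := goldstine_finset hF1 (insert f (insert g (s.image fun q => q.2.2)))
      (ε := 1 / (4 * ((M : ℝ) + 1))) (by positivity)
    have hz' : ∀ k ∈ insert f (insert g (s.image fun q => q.2.2)), F k = 1 →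
        1 - 1 / (4 * ((M : ℝ) + 1)) ≤ k z := by
      intro k hk hk1
      have := (abs_lt.1 (hz k hk)).1
      rw [hk1] at this
      linarith
    refine ⟨(M, z, g), ⟨hz1, hgK, hFg, hz' f (by simp) hf, hz' g (by simp) hFg⟩, ?_⟩
    intro q hq
    refine ⟨Nat.lt_succ_of_le (Finset.le_sup (f := fun q : ℕ × X × StrongDual ℝ X => q.1) hq),
      hg0 _ (Finset.mem_image_of_mem _ hq), hz' _ ?_ (hs q hq).2.2.1⟩
    exact Finset.mem_insert_of_mem (Finset.mem_insert_of_mem (Finset.mem_image_of_mem _ hq)))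
  refine ⟨K, fun n => (a n).1, fun n => (a n).2.1, fun n => (a n).2.2, hK,
    strictMono_nat_of_lt_succ fun n => (har n (n + 1) n.lt_succ_self).1, fun n => (haP n).1,
    fun n => (haP n).2.1, fun n => (haP n).2.2.2.1, fun i n hin => ?_,
    fun i n hni => (har n i hni).2.1⟩
  rcases hin.eq_or_lt with rfl | hlt
  · exact (haP i).2.2.2.2
  · exact (har i n hlt).2.2

/-- A non-reflexive space contains a nonempty closed convex set without an element of minimal
norm. -/
lemma exists_no_min_norm [CompleteSpace X]
    (hX : ¬ Function.Surjective (NormedSpace.inclusionInDoubleDual ℝ X)) :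
    ∃ C : Set X, C.Nonempty ∧ IsClosed C ∧ Convex ℝ C ∧ ∀ y ∈ C, ∃ x ∈ C, ‖x‖ < ‖y‖ := by
  obtain ⟨F, hF, hF1, f, hf1, hFf⟩ := exists_norm_attaining_notMem_range hX
  obtain ⟨K, N, z, g, hK, hN, hz, hg, hfz, hgz, hgz0⟩ := exists_james_sequence hF hF1 hFf
  let Y : Submodule ℝ X := (Submodule.span ℝ (Set.range z)).topologicalClosure
  -- On `Y` the functionals `g i` tend to zero pointwise, so they cannot all be at least one.
  have hY : ∀ y ∈ Y, ∃ i, g i y < 1 := by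
    intro y hy
    obtain ⟨w, hw, hyw⟩ := Metric.mem_closure_iff.1 (show y ∈ closure _ from hy) (1 / K)
      (by positivity)
    have hw0 : ∃ m, ∀ i, m ≤ i → g i w = 0 := by
      refine Submodule.span_induction (p := fun w _ => ∃ m, ∀ i, m ≤ i → g i w = 0)
        ?_ ⟨0, by simp⟩ ?_ ?_ hw
      · rintro _ ⟨n, rfl⟩
        exact ⟨n + 1, fun i hi => hgz0 i n hi⟩
      · rintro x x' _ _ ⟨m, hm⟩ ⟨m', hm'⟩
        exact ⟨max m m', fun i hi => by
          rw [map_add, hm i (le_of_max_le_left hi), hm' i (le_of_max_le_right hi), add_zero]⟩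
      · rintro c x _ ⟨m, hm⟩
        exact ⟨m, fun i hi => by rw [map_smul, hm i hi, smul_zero]⟩
    obtain ⟨m, hm⟩ := hw0
    refine ⟨m, ?_⟩
    calc g m y = g m (y - w) := by rw [map_sub, hm m le_rfl, sub_zero]
      _ ≤ ‖g m (y - w)‖ := le_abs_self _
      _ ≤ ‖g m‖ * ‖y - w‖ := (g m).le_opNorm _
      _ ≤ K * ‖y - w‖ := by gcongr; exact hg m
      _ < K * (1 / K) := by
        rw [dist_eq_norm] at hyw
        gcongr
      _ = 1 := by field_simp
  -- Points of `C` have norm at least one, and norm one would force `1 ≤ g i` for every `i`.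
  let C : Set X := {y | y ∈ Y ∧ 1 ≤ f y ∧
    ∀ i, 1 ≤ g i y + 2 * ((N i : ℝ) + 1) * (f y - 1)}
  let x : ℕ → X := fun n => (1 + 1 / ((N n : ℝ) + 1)) • z n
  have hxC : ∀ n, x n ∈ C := by
    intro n
    set t : ℝ := 1 / ((N n : ℝ) + 1) with ht
    have ht0 : 0 < t := by positivity
    have ht1 : t ≤ 1 := by
      rw [ht, div_le_one (by positivity)]
      linarith [(Nat.cast_nonneg (N n) : (0 : ℝ) ≤ N n)]
    have ht4 : 1 / (4 * ((N n : ℝ) + 1)) = t / 4 := by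
      rw [ht]
      field_simp
    have hfx : 1 + t / 2 ≤ f (x n) := by
      have h1 := hfz n
      rw [ht4] at h1
      change 1 + t / 2 ≤ f ((1 + t) • z n)
      rw [map_smul, smul_eq_mul]
      nlinarith
    refine ⟨Y.smul_mem _ (Submodule.le_topologicalClosure _
      (Submodule.subset_span ⟨n, rfl⟩)), by linarith, fun i => ?_⟩
    rcases le_or_gt i n with hin | hni
    · have h1 := hgz i n hin
      rw [ht4] at h1
      have h2 : 1 ≤ g i (x n) := by
        change 1 ≤ g i ((1 + t) • z n)
        rw [map_smul, smul_eq_mul]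
        nlinarith
      have h3 : 0 ≤ 2 * ((N i : ℝ) + 1) * (f (x n) - 1) :=
        mul_nonneg (by positivity) (by linarith)
      linarith
    · have h1 : g i (x n) = 0 := by
        change g i ((1 + t) • z n) = 0
        rw [map_smul, hgz0 i n hni, smul_zero]
      have h2 : (N n : ℝ) ≤ N i := by exact_mod_cast (hN hni).le
      have h3 : ((N n : ℝ) + 1) * t = 1 := by
        rw [ht]
        field_simp
      rw [h1, zero_add]
      calc (1 : ℝ) = 2 * ((N n : ℝ) + 1) * (t / 2) := by linarith
        _ ≤ 2 * ((N i : ℝ) + 1) * (f (x n) - 1) := by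
          gcongr
          linarith
  refine ⟨C, ⟨x 0, hxC 0⟩, ?_, ?_, fun y hy => ?_⟩
  · have hYc : IsClosed (Y : Set X) := Submodule.isClosed_topologicalClosure _
    have : C = (Y : Set X) ∩ ({y | 1 ≤ f y} ∩
        ⋂ i, {y | 1 ≤ g i y + 2 * ((N i : ℝ) + 1) * (f y - 1)}) := by
      ext y
      simp [C]
    rw [this]
    refine hYc.inter ((isClosed_le (by fun_prop) (by fun_prop)).inter
      (isClosed_iInter fun i => isClosed_le (by fun_prop) (by fun_prop)))
  · rintro y ⟨hyY, hyf, hyg⟩ y' ⟨hyY', hyf', hyg'⟩ α β hα hβ hαβ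
    refine ⟨Y.add_mem (Y.smul_mem _ hyY) (Y.smul_mem _ hyY'), ?_, fun i => ?_⟩
    · rw [map_add, map_smul, map_smul, smul_eq_mul, smul_eq_mul]
      nlinarith
    · simp only [map_add, map_smul, smul_eq_mul]
      have h1 := mul_le_mul_of_nonneg_left (hyg i) hα
      have h2 := mul_le_mul_of_nonneg_left (hyg' i) hβ
      have h3 : α * (g i y + 2 * ((N i : ℝ) + 1) * (f y - 1)) +
          β * (g i y' + 2 * ((N i : ℝ) + 1) * (f y' - 1)) =
          α * g i y + β * g i y' +
            2 * ((N i : ℝ) + 1) * (α * f y + β * f y' - (α + β)) := by ring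
      rw [hαβ] at h3
      linarith
  · obtain ⟨hyY, hyf, hyg⟩ := hy
    have hfy : f y ≤ ‖y‖ := (le_abs_self _).trans <| by
      simpa using f.le_of_opNorm_le hf1 y
    have hy1 : 1 < ‖y‖ := by
      by_contra! hle
      have h1 : f y = 1 := le_antisymm (hfy.trans hle) hyf
      obtain ⟨i, hi⟩ := hY y hyY
      have := hyg i
      rw [h1, sub_self, mul_zero, add_zero] at this
      linarith
    obtain ⟨n, hn⟩ := exists_nat_one_div_lt (sub_pos.2 hy1)
    refine ⟨x n, hxC n, ?_⟩
    have h1 : ‖x n‖ ≤ 1 + 1 / ((N n : ℝ) + 1) := by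
      rw [norm_smul, Real.norm_of_nonneg (by positivity)]
      exact mul_le_of_le_one_right (by positivity) (hz n)
    have h2 : 1 / ((N n : ℝ) + 1) ≤ 1 / ((n : ℝ) + 1) := by
      have : (n : ℝ) ≤ N n := by exact_mod_cast hN.le_apply
      gcongr
    linarith

/-- A Banach space is reflexive iff every nonempty closed convex subset is simultaneously
proximinal. -/
theorem reflexive_iff_closed_convex_simProximinal [CompleteSpace X] :
    Function.Surjective (NormedSpace.inclusionInDoubleDual ℝ X) ↔
      ∀ C : Set X, C.Nonempty → IsClosed C → Convex ℝ C → SimProximinal C := by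
  refine ⟨fun hX C hne hc hconv => simProximinal_of_reflexive hX hne hc hconv, fun h => ?_⟩
  by_contra hX
  obtain ⟨C, hne, hc, hconv, hmin⟩ := exists_no_min_norm hX
  obtain ⟨y, hyC, hy⟩ := h C hne hc hconv {0} (Set.singleton_nonempty 0)
    Bornology.isBounded_singleton
  have hsup : ∀ w : X, simSup {0} w = ‖w‖ := by
    intro w
    simp [simSup]
  obtain ⟨x, hxC, hx⟩ := hmin y hyC
  have hle : simDist {0} C ≤ simSup {0} x := by
    refine ciInf_le (f := fun w : C => simSup {0} (w : X)) ⟨0, ?_⟩ ⟨x, hxC⟩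
    rintro _ ⟨w, rfl⟩
    exact (norm_nonneg _).trans_eq (hsup w).symm
  rw [← hy, hsup, hsup] at hle
  exact absurd hx hle.not_gt
end

section
/- Let X be an infinite-dimensional real Banach space. Then there exist nonempty sets A, B ⊆ X such that A and B are each simultaneously approximatively compact, the sum A + B is closed, and A + B is not simultaneously proximinal. -/
/-!
A set with finite bounded parts is simultaneously approximatively compact, because minimizing
sequences are bounded (`simApproxCompact_of_finite`). So it is enough to add two such sets.

By Riesz's lemma there are unit vectors `x n` that stay at distance `≥ 1/2` from every line
`ℝ x m`, `m < n` (`exists_riesz_seq`). Put `z n = (1 + 1/(n+1)) x n`; these points are uniformly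
separated, and their norms decrease to `1` without attaining it. With `e = x 0` take
`A = {10 n e}` and `B = {z m - 10 m e}`. The elements of `A + B` are `10 (n - m) e + z m`: they are
pairwise at distance `≥ 1/2`, so `A + B` is closed; those with `n ≠ m` have norm `≥ 8`, and those
with `n = m` are exactly the `z m`. Hence `{0}` is at distance `1` from `A + B`, and no point
realizes this distance.
-/


open Filter Topology Pointwise

variable {X : Type*} [NormedAddCommGroup X] [NormedSpace ℝ X]

theorem simApproxCompact_of_finite {C : Set X}
    (hC : ∀ R : ℝ, (C ∩ Metric.closedBall 0 R).Finite) : SimApproxCompact C := by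
  rintro A ⟨a, ha⟩ hA y ⟨hyC, hlim⟩
  obtain ⟨M, hM⟩ := hlim.bddAbove_range
  obtain ⟨K, hK⟩ := hA.exists_norm_le
  have hle : ∀ n, ‖a - y n‖ ≤ M := fun n => by
    have hbdd : BddAbove (Set.range fun b : A => ‖(b : X) - y n‖) := by
      refine ⟨K + ‖y n‖, ?_⟩
      rintro _ ⟨b, rfl⟩
      exact (norm_sub_le _ _).trans (by have := hK b b.2; linarith)
    exact (le_ciSup hbdd ⟨a, ha⟩).trans (hM ⟨n, rfl⟩)
  have hmem : ∀ n, y n ∈ C ∩ Metric.closedBall 0 (‖a‖ + M) := fun n => by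
    refine ⟨hyC n, ?_⟩
    rw [mem_closedBall_zero_iff]
    have h1 := norm_sub_norm_le (y n) a
    rw [norm_sub_rev] at h1
    linarith [hle n]
  obtain ⟨c, hc, φ, hφ, ht⟩ := (hC (‖a‖ + M)).isCompact.tendsto_subseq hmem
  exact ⟨c, hc.1, φ, hφ, ht⟩

theorem simApproxCompact_range {a : ℕ → X} (ha : ∀ n : ℕ, (n : ℝ) ≤ ‖a n‖) :
    SimApproxCompact (Set.range a) := by
  refine simApproxCompact_of_finite fun R => ?_
  refine ((Set.finite_Iic ⌊R⌋₊).image a).subset ?_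
  rintro _ ⟨⟨n, rfl⟩, hn⟩
  rw [mem_closedBall_zero_iff] at hn
  exact ⟨n, Nat.le_floor ((ha n).trans hn), rfl⟩

theorem exists_riesz_seq (h : ¬ FiniteDimensional ℝ X) :
    ∃ x : ℕ → X, (∀ n, ‖x n‖ = 1) ∧
      ∀ m n, m < n → ∀ t : ℝ, 1 / 2 ≤ ‖x n - t • x m‖ := by
  refine exists_seq_of_forall_finset_exists (fun x : X => ‖x‖ = 1)
    (fun x y => ∀ t : ℝ, 1 / 2 ≤ ‖y - t • x‖) fun s _ => ?_
  let F : Submodule ℝ X := Submodule.span ℝ (s : Set X)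
  have : FiniteDimensional ℝ F := FiniteDimensional.span_finset ℝ s
  have hF : ∃ x, x ∉ F := by
    by_contra! hall
    have htop : F = ⊤ := by ext x; simp [hall x]
    refine h (Module.finite_def.2 ?_)
    rw [← htop]
    exact ⟨s, rfl⟩
  obtain ⟨w, hw, hdist⟩ :=
    riesz_lemma F.closed_of_finiteDimensional hF (r := 1 / 2) (by norm_num)
  have hpos : 0 < ‖w‖ := norm_pos_iff.2 fun h0 => hw (h0 ▸ F.zero_mem)
  refine ⟨‖w‖⁻¹ • w, ?_, fun x hx t => ?_⟩
  · rw [norm_smul, norm_inv, norm_norm, inv_mul_cancel₀ hpos.ne']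
  · have h1 := hdist ((‖w‖ * t) • x) (F.smul_mem _ (Submodule.subset_span hx))
    have h2 : ‖w‖⁻¹ • w - t • x = ‖w‖⁻¹ • (w - (‖w‖ * t) • x) := by
      rw [smul_sub, smul_smul, inv_mul_cancel_left₀ hpos.ne']
    rw [h2, norm_smul, norm_inv, norm_norm, inv_mul_eq_div, le_div_iff₀ hpos]
    exact h1

/-- In any infinite-dimensional Banach space there are two simultaneously approximatively
compact sets whose sum is closed but not simultaneously proximinal. -/
theorem exists_simApproxCompact_sum_closed_not_simProximinal [CompleteSpace X]
    (h : ¬ FiniteDimensional ℝ X) :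
    ∃ A B : Set X, A.Nonempty ∧ B.Nonempty ∧ SimApproxCompact A ∧ SimApproxCompact B ∧
      IsClosed (A + B) ∧ ¬ SimProximinal (A + B) := by
  obtain ⟨x, hx1, hx⟩ := exists_riesz_seq h
  set c : ℕ → ℝ := fun n => 1 + 1 / ((n : ℝ) + 1) with hc
  have hc1 : ∀ n, 1 < c n := fun n => by
    have : (0 : ℝ) < 1 / ((n : ℝ) + 1) := by positivity
    simp only [hc]; linarith
  have hc2 : ∀ n, c n ≤ 2 := fun n => by
    have : 1 / ((n : ℝ) + 1) ≤ 1 := by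
      rw [div_le_one (by positivity)]; linarith [n.cast_nonneg (α := ℝ)]
    simp only [hc]; linarith
  have hclim : Tendsto c atTop (𝓝 1) := by
    simpa [hc] using tendsto_one_div_add_atTop_nhds_zero_nat (𝕜 := ℝ).const_add 1
  set z : ℕ → X := fun n => c n • x n with hz
  have hzn : ∀ n, ‖z n‖ = c n := fun n => by
    rw [hz, norm_smul, hx1, mul_one, Real.norm_of_nonneg (by linarith [hc1 n])]
  have hsep_lt : ∀ m n, m < n → 1 / 2 ≤ ‖z n - z m‖ := fun m n hmn => by
    have hpos : 0 < c n := by linarith [hc1 n]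
    have h2 : z n - z m = c n • (x n - ((c n)⁻¹ * c m) • x m) := by
      rw [smul_sub, smul_smul, mul_inv_cancel_left₀ hpos.ne']
    rw [h2, norm_smul, Real.norm_of_nonneg hpos.le]
    nlinarith [hx m n hmn ((c n)⁻¹ * c m), hc1 n]
  have hsep : ∀ m n, m ≠ n → 1 / 2 ≤ ‖z n - z m‖ := fun m n hmn => by
    rcases lt_or_gt_of_ne hmn with h1 | h1
    · exact hsep_lt m n h1
    · rw [norm_sub_rev]; exact hsep_lt n m h1
  set e : X := x 0
  have he : ‖e‖ = 1 := hx1 0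
  -- A nonzero integer multiple of `10 e` has norm at least `10`.
  have hint : ∀ k : ℤ, k ≠ 0 → 10 ≤ ‖(10 * (k : ℝ)) • e‖ := fun k hk => by
    have : (1 : ℝ) ≤ |(k : ℝ)| := by exact_mod_cast Int.one_le_abs hk
    rw [norm_smul, he, mul_one, Real.norm_eq_abs, abs_mul, abs_of_pos (by norm_num)]
    linarith
  set a : ℕ → X := fun n => (10 * (n : ℝ)) • e with ha
  set b : ℕ → X := fun n => z n - (10 * (n : ℝ)) • e with hb
  have hnorm_a : ∀ n, ‖a n‖ = 10 * n := fun n => by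
    rw [ha, norm_smul, he, mul_one, Real.norm_of_nonneg (by positivity)]
  have hab : ∀ n m : ℕ, a n + b m = (10 * (((n : ℤ) - m : ℤ) : ℝ)) • e + z m := fun n m => by
    simp only [ha, hb]; push_cast; module
  have hmem : ∀ y, y ∈ Set.range a + Set.range b ↔ ∃ n m, a n + b m = y := fun y => by
    simp [Set.mem_add]
  have hzmem : ∀ n, z n ∈ Set.range a + Set.range b := fun n =>
    (hmem _).2 ⟨n, n, by rw [hab]; simp⟩
  have hgt : ∀ y ∈ Set.range a + Set.range b, 1 < ‖y‖ := by
    intro y hy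
    obtain ⟨n, m, rfl⟩ := (hmem y).1 hy
    rw [hab]
    by_cases hk : (n : ℤ) - m = 0
    · rw [hk]; simp [hzn, hc1]
    · have h1 := hint _ hk
      have h2 := norm_le_norm_add_norm_sub' ((10 * (((n : ℤ) - m : ℤ) : ℝ)) • e) (-z m)
      rw [sub_neg_eq_add, norm_neg, hzn] at h2
      linarith [hc2 m]
  refine ⟨Set.range a, Set.range b, Set.range_nonempty _, Set.range_nonempty _,
    simApproxCompact_range fun n => ?_, ?_, ?_, fun hprox => ?_⟩
  · rw [hnorm_a]; linarith [n.cast_nonneg (α := ℝ)]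
  · refine simApproxCompact_range fun n => ?_
    rcases Nat.eq_zero_or_pos n with rfl | hn
    · simp
    · have h1 : (1 : ℝ) ≤ n := by exact_mod_cast hn
      have h2 := norm_sub_norm_le (a n) (z n)
      rw [norm_sub_rev, hnorm_a, hzn] at h2
      have h3 : ‖b n‖ = ‖z n - a n‖ := rfl
      linarith [hc2 n]
  · refine Metric.isClosed_of_pairwise_le_dist (ε := 1 / 2) (by norm_num) ?_
    intro u hu v hv huv
    obtain ⟨n, m, rfl⟩ := (hmem u).1 hu
    obtain ⟨n', m', rfl⟩ := (hmem v).1 hv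
    rw [dist_eq_norm]
    by_cases hk : ((n : ℤ) - m) - ((n' : ℤ) - m') = 0
    · have hk' : (n : ℤ) - m = (n' : ℤ) - m' := sub_eq_zero.1 hk
      have hm : m' ≠ m := by
        rintro rfl
        exact huv (by rw [hab, hab, hk'])
      rw [hab, hab, hk', add_sub_add_left_eq_sub]
      exact hsep _ _ hm
    · have h1 := hint _ hk
      have h2 : a n + b m - (a n' + b m') =
          (10 * ((((n : ℤ) - m) - ((n' : ℤ) - m') : ℤ) : ℝ)) • e - (z m' - z m) := by
        rw [hab, hab]; push_cast; module
      have h3 := norm_sub_norm_le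
        ((10 * ((((n : ℤ) - m) - ((n' : ℤ) - m') : ℤ) : ℝ)) • e) (z m' - z m)
      have h4 := norm_sub_le (z m') (z m)
      rw [hzn, hzn] at h4
      rw [h2]
      linarith [hc2 m, hc2 m']
  · have hsup : ∀ y : X, simSup {0} y = ‖y‖ := fun y => by
      simp [simSup]
    obtain ⟨y, hy, hyd⟩ := hprox {0} (Set.singleton_nonempty 0) Bornology.isBounded_singleton
    have hle : ∀ n, ‖y‖ ≤ c n := fun n => by
      have hbdd : BddBelow (Set.range fun w : ↥(Set.range a + Set.range b) =>
          simSup {0} (w : X)) := by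
        refine ⟨0, ?_⟩
        rintro _ ⟨w, rfl⟩
        simp [hsup]
      have h1 : simDist {0} (Set.range a + Set.range b) ≤ simSup {0} (z n) :=
        ciInf_le hbdd ⟨z n, hzmem n⟩
      rw [hsup] at hyd h1
      rw [hyd, ← hzn]
      exact h1
    exact (hgt y hy).not_ge (ge_of_tendsto' hclim hle)
end

section
/- Let X be a real Banach space and let C, D ⊆ X be nonempty convex sets such that C is compact and D is simultaneously proximinal. Then C + D is simultaneously proximinal. -/
/-!
For a bounded set `A`, the function `c ↦ d(A - c, D) = inf_{d ∈ D} sup_{a ∈ A} ‖a - (c + d)‖`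
is 1-Lipschitz, since `y ↦ sup_{a ∈ A} ‖a - y‖` is. It therefore attains its minimum on the
compact set `C` at some `c₀`, and a best simultaneous approximation `d₀ ∈ D` to the translate
`A - c₀` yields the best simultaneous approximation `c₀ + d₀` to `A` from `C + D`.
-/

open Filter Topology Pointwise

variable {X : Type*} [NormedAddCommGroup X] [NormedSpace ℝ X]

section Aux

variable {E : Type*} [NormedAddCommGroup E]

/-- Boundedness of `A` keeps the supremum defining `simSup A y` from taking its junk value. -/
lemma bddAbove_simSup {A : Set E} (hA : Bornology.IsBounded A) (y : E) :
    BddAbove (Set.range fun a : A => ‖(a : E) - y‖) := by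
  obtain ⟨R, hR⟩ := hA.exists_norm_le
  refine ⟨R + ‖y‖, ?_⟩
  rintro _ ⟨a, rfl⟩
  exact (norm_sub_le _ _).trans (by gcongr; exact hR a a.2)

lemma simSup_nonneg (A : Set E) (y : E) : 0 ≤ simSup A y :=
  Real.iSup_nonneg fun _ => norm_nonneg _

lemma simSup_le_add {A : Set E} (hne : A.Nonempty) (hA : Bornology.IsBounded A) (y z : E) :
    simSup A y ≤ simSup A z + ‖y - z‖ := by
  have := hne.to_subtype
  refine ciSup_le fun a => ?_
  have h1 : ‖(a : E) - z‖ ≤ simSup A z := le_ciSup (bddAbove_simSup hA z) a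
  have h2 : ‖(a : E) - y‖ ≤ ‖(a : E) - z‖ + ‖z - y‖ := norm_sub_le_norm_sub_add_norm_sub _ _ _
  rw [norm_sub_rev z y] at h2
  linarith

lemma simSup_image_sub (A : Set E) (c y : E) :
    simSup ((fun a => a - c) '' A) y = simSup A (c + y) := by
  unfold simSup
  rw [← sSup_image' (f := fun a => ‖a - y‖), ← sSup_image' (f := fun a => ‖a - (c + y)‖),
    Set.image_image]
  simp only [sub_sub]

lemma simDist_le (A : Set E) {D : Set E} {y : E} (hy : y ∈ D) : simDist A D ≤ simSup A y :=
  ciInf_le (f := fun y : D => simSup A (y : E))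
    ⟨0, by rintro _ ⟨y, rfl⟩; exact simSup_nonneg A y⟩ ⟨y, hy⟩

lemma lipschitzWith_simDist_image_sub {A D : Set E} (hne : A.Nonempty)
    (hA : Bornology.IsBounded A) (hD : D.Nonempty) :
    LipschitzWith 1 fun c => simDist ((fun a => a - c) '' A) D := by
  have := hD.to_subtype
  refine LipschitzWith.of_le_add fun x y => ?_
  rw [← sub_le_iff_le_add]
  refine le_ciInf fun d => ?_
  have h1 := simDist_le ((fun a => a - x) '' A) d.2
  have h2 := simSup_le_add hne hA (x + d) (y + d)
  rw [simSup_image_sub] at h1 ⊢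
  rw [add_sub_add_right_eq_sub, ← dist_eq_norm] at h2
  linarith

end Aux

/-- The sum of a compact convex set and a simultaneously proximinal convex set is
simultaneously proximinal. -/
theorem compact_add_simProximinal [CompleteSpace X]
    (C D : Set X) (hCne : C.Nonempty) (hDne : D.Nonempty)
    (hCc : Convex ℝ C) (hDc : Convex ℝ D)
    (hC : IsCompact C) (hD : SimProximinal D) :
    SimProximinal (C + D) := by
  intro A hne hA
  have hL := lipschitzWith_simDist_image_sub hne hA hDne
  obtain ⟨c₀, hc₀, hmin⟩ := hC.exists_isMinOn hCne hL.continuous.continuousOn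
  have hbdd : Bornology.IsBounded ((fun a => a - c₀) '' A) := by
    simpa only [sub_eq_add_neg, id] using
      (LipschitzWith.id.add (LipschitzWith.const (-c₀))).isBounded_image hA
  obtain ⟨d₀, hd₀, hbest⟩ := hD _ (hne.image _) hbdd
  rw [simSup_image_sub] at hbest
  have hmem : c₀ + d₀ ∈ C + D := Set.add_mem_add hc₀ hd₀
  refine ⟨c₀ + d₀, hmem, le_antisymm ?_ (simDist_le A hmem)⟩
  have : Nonempty (C + D : Set X) := ⟨⟨_, hmem⟩⟩
  refine le_ciInf ?_
  rintro ⟨_, c, hc, d, hd, rfl⟩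
  calc simSup A (c₀ + d₀) = simDist ((fun a => a - c₀) '' A) D := hbest
    _ ≤ simDist ((fun a => a - c) '' A) D := hmin hc
    _ ≤ simSup ((fun a => a - c) '' A) d := simDist_le _ hd
    _ = simSup A (c + d) := simSup_image_sub A c d
end

section
/- Let X be a real Banach space and let (x_n) be a bounded sequence in X with no weakly convergent subsequence. Then (x_n) has a subsequence (y_k) satisfying the James condition: there exists θ > 0 such that dist(co{y_1, …, y_k}, co{y_{k+1}, y_{k+2}, …}) ≥ θ for every k ∈ ℕ. -/
/-!
The proof compares the sequence with its weak-star cluster points in the bidual. By Banach–Alaoglu,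
along every ultrafilter `U` finer than `atTop` the bounded sequence converges weak-star to some
`F` in the bidual.

If every such `F` comes from a point of `X`, then `x` has a weakly convergent subsequence (the
sequential half of Eberlein–Šmulian, `exists_subseq_weakTendsto`): countably many functionals
separate the points of the closed span of `x`, a diagonal argument makes them all converge along a
subsequence, and hence all weak cluster points of that subsequence coincide.

Otherwise some limit `F` lies at distance at least `d > 0` from `X`, which is closed in the bidual
by completeness. For a finite `S`, compactness of `co S` yields finitely many functionals of norm at most one
witnessing this distance on `co S`, up to a factor `1/2`. The terms of `x` on which these
functionals are close to the value of `F` have convex hull at distance at least `d / 4` from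
`co S`, and their indices form a member of `U` (`exists_mem_ultrafilter_separated`). Choosing the
indices recursively gives the James condition.
-/


open Filter Topology Pointwise

variable {X : Type*} [NormedAddCommGroup X] [NormedSpace ℝ X]

theorem exists_bidual_limit (x : ℕ → X) (hb : Bornology.IsBounded (Set.range x))
    (U : Ultrafilter ℕ) : ∃ F : StrongDual ℝ (StrongDual ℝ X),
      ∀ f : StrongDual ℝ X, Tendsto (fun n => f (x n)) U (𝓝 (F f)) := by
  obtain ⟨C, hC⟩ := hb.exists_norm_le
  let J : ℕ → WeakDual ℝ (StrongDual ℝ X) := fun n =>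
    StrongDual.toWeakDual (NormedSpace.inclusionInDoubleDual ℝ X (x n))
  have hK := WeakDual.isCompact_closedBall (𝕜 := ℝ) (E := StrongDual ℝ X) 0 C
  have hJ : ∀ n, J n ∈ WeakDual.toStrongDual ⁻¹' Metric.closedBall (0 : StrongDual ℝ _) C := by
    intro n
    refine (mem_closedBall_zero_iff (E := StrongDual ℝ (StrongDual ℝ X))).2 ?_
    exact (NormedSpace.double_dual_bound ℝ X _).trans (hC _ ⟨n, rfl⟩)
  obtain ⟨F, -, hF⟩ := hK.ultrafilter_le_nhds (U.map J)
    (tendsto_principal.2 (Eventually.of_forall hJ))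
  refine ⟨WeakDual.toStrongDual F, fun f => ?_⟩
  exact ((WeakDual.eval_continuous f).tendsto F).comp (show Tendsto J U (𝓝 F) from hF)

theorem exists_seq_dual_separating (s : Set X) (hs : TopologicalSpace.IsSeparable s) :
    ∃ f : ℕ → StrongDual ℝ X, ∀ y ∈ s, (∀ m, f m y = 0) → y = 0 := by
  obtain ⟨t, htc, hst⟩ := hs
  obtain ⟨z, hz⟩ := (htc.union (Set.countable_singleton (0 : X))).exists_eq_range (by simp)
  choose f hf1 hf2 using fun m => exists_dual_vector'' ℝ (z m)
  refine ⟨f, fun y hy h0 => ?_⟩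
  rw [← norm_eq_zero]
  refine le_antisymm (le_of_forall_pos_le_add fun ε hε => ?_) (norm_nonneg _)
  obtain ⟨w, hw, hd⟩ := Metric.mem_closure_iff.1 (hst hy) (ε / 2) (half_pos hε)
  obtain ⟨m, rfl⟩ : w ∈ Set.range z := hz ▸ Or.inl hw
  rw [dist_comm, dist_eq_norm] at hd
  -- `f m` norms `z m` and kills `y`, so `‖z m‖` is controlled by the distance from `z m` to `y`.
  have h1 : ‖z m‖ ≤ ‖z m - y‖ := by
    have h2 : f m (z m - y) = ‖z m‖ := by rw [map_sub, h0, sub_zero, hf2]; rfl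
    rw [← h2]
    refine (le_abs_self _).trans (((f m).le_opNorm _).trans ?_)
    exact mul_le_of_le_one_left (norm_nonneg _) (hf1 m)
  have h3 : ‖y‖ ≤ ‖z m‖ + ‖z m - y‖ := by
    simpa using norm_sub_le (z m) (z m - y)
  linarith

/-- If all weak-star cluster points of `x` in the bidual come from `X`, then `x` has a weakly
convergent subsequence. -/
theorem exists_subseq_weakTendsto (x : ℕ → X) (hb : Bornology.IsBounded (Set.range x))
    (H : ∀ U : Ultrafilter ℕ, (U : Filter ℕ) ≤ atTop →
      ∃ c : X, ∀ f : StrongDual ℝ X, Tendsto (fun n => f (x n)) U (𝓝 (f c))) :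
    ∃ c : X, ∃ φ : ℕ → ℕ, StrictMono φ ∧ WeakTendsto (x ∘ φ) c := by
  let Y : Submodule ℝ X := (Submodule.span ℝ (Set.range x)).topologicalClosure
  have hYsep : TopologicalSpace.IsSeparable (Y : Set X) := by
    rw [Submodule.topologicalClosure_coe]
    exact ((Set.countable_range x).isSeparable.span (R := ℝ)).closure
  obtain ⟨f, hf⟩ := exists_seq_dual_separating (Y : Set X) hYsep
  have hxY : ∀ n, x n ∈ Y := fun n =>
    Submodule.le_topologicalClosure _ (Submodule.subset_span ⟨n, rfl⟩)
  have hmemY : ∀ (V : Ultrafilter ℕ) (c : X),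
      (∀ g : StrongDual ℝ X, Tendsto (fun n => g (x n)) V (𝓝 (g c))) → c ∈ Y := by
    intro V c hc
    by_contra hcY
    obtain ⟨g, u, hg, hu⟩ := geometric_hahn_banach_closed_point (s := (Y : Set X)) (x := c)
      Y.convex (Submodule.isClosed_topologicalClosure _) hcY
    exact absurd (le_of_tendsto' (hc g) fun n => (hg _ (hxY n)).le) (not_le.2 hu)
  obtain ⟨C, hC⟩ := hb.exists_norm_le
  have hK : IsCompact (Set.pi Set.univ fun m : ℕ => Metric.closedBall (0 : ℝ) (‖f m‖ * C)) :=
    isCompact_univ_pi fun m => isCompact_closedBall _ _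
  obtain ⟨a, -, φ, hφ, ha⟩ := hK.tendsto_subseq (x := fun n m => f m (x n)) (by
    intro n m _
    rw [mem_closedBall_zero_iff]
    exact ((f m).le_opNorm _).trans
      (mul_le_mul_of_nonneg_left (hC _ ⟨n, rfl⟩) (norm_nonneg _)))
  rw [tendsto_pi_nhds] at ha
  have key : ∀ V : Ultrafilter ℕ, (V : Filter ℕ) ≤ atTop → ∃ c ∈ Y, (∀ m, f m c = a m) ∧
      ∀ g : StrongDual ℝ X, Tendsto (fun n => g (x (φ n))) V (𝓝 (g c)) := by
    intro V hV
    obtain ⟨c, hc⟩ := H (V.map φ) (hφ.tendsto_atTop.mono_left hV)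
    have hc' : ∀ g : StrongDual ℝ X, Tendsto (fun n => g (x (φ n))) V (𝓝 (g c)) := fun g =>
      (hc g).comp (tendsto_map (f := φ) (x := (V : Filter ℕ)))
    exact ⟨c, hmemY _ c hc, fun m => tendsto_nhds_unique (hc' (f m)) ((ha m).mono_left hV), hc'⟩
  obtain ⟨c, hcY, hca, -⟩ := key (hyperfilter ℕ) Nat.hyperfilter_le_atTop
  refine ⟨c, φ, hφ, fun g => ?_⟩
  rw [tendsto_iff_ultrafilter]
  intro V hV
  obtain ⟨c', hcY', hca', hc'⟩ := key V hV
  have : c' = c := sub_eq_zero.1 (hf _ (Y.sub_mem hcY' hcY) fun m => by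
    rw [map_sub, hca, hca', sub_self])
  exact this ▸ hc' g

/-- If the weak-star limit of `x` along `U` has distance at least `d` from `X`, then, for `U`-almost
all indices, the terms of `x` are uniformly separated from the convex hull of a given finite set. -/
theorem exists_mem_ultrafilter_separated (x : ℕ → X) (U : Ultrafilter ℕ)
    (F : StrongDual ℝ (StrongDual ℝ X))
    (hF : ∀ f : StrongDual ℝ X, Tendsto (fun n => f (x n)) U (𝓝 (F f)))
    (d : ℝ) (hd : 0 < d) (hdF : ∀ u : X, d ≤ ‖F - NormedSpace.inclusionInDoubleDual ℝ X u‖)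
    (S : Set X) (hS : S.Finite) :
    ∃ A ∈ U, ∀ u ∈ convexHull ℝ S, ∀ v ∈ convexHull ℝ (x '' A), d / 4 ≤ ‖u - v‖ := by
  have hnorm : ∀ u : X, ∃ f : StrongDual ℝ X, ‖f‖ ≤ 1 ∧ d / 2 < F f - f u := by
    intro u
    by_contra! hcon
    have : ‖F - NormedSpace.inclusionInDoubleDual ℝ X u‖ ≤ d / 2 := by
      refine ContinuousLinearMap.opNorm_le_of_unit_norm (by positivity) fun f hf => ?_
      rw [Real.norm_eq_abs, abs_le]
      have h1 := hcon f hf.le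
      have h2 := hcon (-f) (by rw [norm_neg, hf])
      simp only [map_neg, neg_apply] at h2
      simp only [sub_apply, NormedSpace.dual_def]
      constructor <;> linarith
    linarith [hdF u]
  choose f hf1 hf2 using hnorm
  obtain ⟨t, -, ht⟩ := (hS.isCompact_convexHull (𝕜 := ℝ)).elim_nhds_subcover
    (fun u => {w | d / 2 < F (f u) - f u w}) (fun u _ =>
      (isOpen_lt continuous_const (continuous_const.sub (f u).continuous)).mem_nhds (hf2 u))
  refine ⟨{n | ∀ u ∈ t, F (f u) - d / 4 < f u (x n)}, ?_, ?_⟩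
  · refine (Filter.eventually_all_finset t).2 fun u _ => ?_
    exact (hF (f u)).eventually (lt_mem_nhds (by linarith))
  · intro u hu v hv
    obtain ⟨w, hw, huw⟩ := Set.mem_iUnion₂.1 (ht hu)
    have hv' : F (f w) - d / 4 ≤ f w v := by
      refine convexHull_min (t := {v | F (f w) - d / 4 ≤ f w v}) ?_
        (convex_halfSpace_ge (f w).toLinearMap.isLinear _) hv
      rintro _ ⟨n, hn, rfl⟩
      exact (hn w hw).le
    have huw' : d / 2 < F (f w) - f w u := huw
    have h1 : f w (v - u) ≤ ‖u - v‖ := by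
      rw [norm_sub_rev]
      refine (le_abs_self _).trans (((f w).le_opNorm _).trans ?_)
      exact mul_le_of_le_one_left (norm_nonneg _) (hf1 w)
    rw [map_sub] at h1
    linarith

/-- A bounded sequence with no weakly convergent subsequence has a subsequence satisfying the
James condition. -/
theorem exists_subseq_james_condition [CompleteSpace X]
    (x : ℕ → X) (hb : Bornology.IsBounded (Set.range x))
    (h : ¬ ∃ c : X, ∃ φ : ℕ → ℕ, StrictMono φ ∧ WeakTendsto (x ∘ φ) c) :
    ∃ φ : ℕ → ℕ, StrictMono φ ∧ ∃ θ > (0 : ℝ), ∀ k : ℕ,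
      ∀ u ∈ convexHull ℝ ((x ∘ φ) '' {i | i ≤ k}),
      ∀ v ∈ convexHull ℝ ((x ∘ φ) '' {i | k < i}), θ ≤ ‖u - v‖ := by
  classical
  by_cases H : ∀ U : Ultrafilter ℕ, (U : Filter ℕ) ≤ atTop →
      ∃ c : X, ∀ f : StrongDual ℝ X, Tendsto (fun n => f (x n)) U (𝓝 (f c))
  · exact absurd (exists_subseq_weakTendsto x hb H) h
  push Not at H
  obtain ⟨U, hU, hno⟩ := H
  obtain ⟨F, hF⟩ := exists_bidual_limit x hb U
  let R : Set (StrongDual ℝ (StrongDual ℝ X)) :=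
    Set.range (NormedSpace.inclusionInDoubleDualLi (E := X) ℝ)
  have hR : IsClosed R :=
    (NormedSpace.inclusionInDoubleDualLi
      (E := X) ℝ).isometry.isUniformInducing.isComplete_range.isClosed
  have hFR : F ∉ R := by
    rintro ⟨c, rfl⟩
    obtain ⟨f, hf⟩ := hno c
    exact hf (hF f)
  have hne : R.Nonempty := Set.range_nonempty _
  have hd : 0 < Metric.infDist F R := (hR.notMem_iff_infDist_pos hne).1 hFR
  have hdF : ∀ u : X, Metric.infDist F R ≤ ‖F - NormedSpace.inclusionInDoubleDual ℝ X u‖ := by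
    intro u
    have hu : NormedSpace.inclusionInDoubleDual ℝ X u ∈ R := ⟨u, rfl⟩
    exact (Metric.infDist_le_dist_of_mem hu).trans_eq
      (dist_eq_norm (E := StrongDual ℝ (StrongDual ℝ X)) _ _)
  choose A hAU hA using fun N : ℕ => exists_mem_ultrafilter_separated x U F hF _ hd hdF
    (x '' Set.Iic N) ((Set.finite_Iic N).image x)
  have hnext : ∀ N : ℕ, ∃ n, N < n ∧ ∀ j ≤ N, n ∈ A j := by
    intro N
    have h1 : ∀ᶠ n in (U : Filter ℕ), N < n := hU (eventually_gt_atTop N)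
    have h2 : ∀ᶠ n in (U : Filter ℕ), ∀ j ∈ Set.Iic N, n ∈ A j :=
      (Filter.eventually_all_finite (Set.finite_Iic N)).2 fun j _ => hAU j
    exact (h1.and h2).exists
  choose g hg1 hg2 using hnext
  let φ : ℕ → ℕ := fun k => g^[k] 0
  have hsucc : ∀ k, φ (k + 1) = g (φ k) := fun k => Function.iterate_succ_apply' g k 0
  have hφ : StrictMono φ := strictMono_nat_of_lt_succ fun k => by
    rw [hsucc]
    exact hg1 _
  refine ⟨φ, hφ, Metric.infDist F R / 4, by positivity, fun k u hu v hv => ?_⟩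
  refine hA (φ k) u (convexHull_mono ?_ hu) v (convexHull_mono ?_ hv)
  · rintro _ ⟨i, hi, rfl⟩
    exact ⟨φ i, hφ.monotone hi, rfl⟩
  · rintro _ ⟨i, hi, rfl⟩
    obtain ⟨j, rfl⟩ : ∃ j, i = j + 1 := ⟨i - 1, by have : k < i := hi; omega⟩
    refine ⟨φ (j + 1), ?_, rfl⟩
    rw [hsucc]
    exact hg2 _ _ (hφ.monotone (Nat.lt_succ_iff.1 hi))
end
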